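/- Let (P_n), P be Borel probability measures on ℝ^d and A ⊂ 𝕊^{d-1} a Borel set with σ(A) > 0. If π_u(P_n) ⇒ π_u(P) for every u ∈ A, and for every u ∈ A the projection π_u(P) has finite moments of all orders and satisfies Carleman's condition, then P_n ⇒ P. -/

import Mathlib

open MeasureTheory Filter
open scoped InnerProductSpace ENNReal Topology BigOperators

/-- Weak convergence of a sequence of measures: convergence of integrals of all
bounded continuous functions. -/
def WeakTendsto {E : Type*} [MeasurableSpace E] [TopologicalSpace E]
    (μ : ℕ → Measure E) (ν : Measure E) : Prop :=
  ∀ f : BoundedContinuousFunction E ℝ,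
    Tendsto (fun n => ∫ x, f x ∂(μ n)) atTop (𝓝 (∫ x, f x ∂ν))

/-- Carleman's condition for a measure on ℝ: the series of reciprocal (2m)-th
roots of the even absolute moments diverges. -/
def Carleman (ν : Measure ℝ) : Prop :=
  ¬ Summable (fun m : ℕ =>
    (∫ t, |t| ^ (2 * (m + 1)) ∂ν) ^ (-(1 / (2 * (m + 1) : ℝ))))


lemma bang_step (M : ℕ → ℝ) (hM : ∀ n, 0 < M n)
    (hmono : ∀ m n, m ≤ n → M (m+1) / M m ≤ M (n+1) / M n)
    (F : ℕ → ℝ → ℂ) (hF : ∀ n t, HasDerivAt (F n) (F (n+1) t) t)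
    (hb : ∀ n t, ‖F n t‖ ≤ M n) (N : ℕ) (x : ℝ)
    (hx : ∀ n, ‖F n x‖ ≤ Real.exp (n - (N + 1 : ℝ)) * M n) (t : ℝ) (hxt : x ≤ t)
    (ht : t ≤ x + M N / M (N+1) / Real.exp 1) (n : ℕ) :
    ‖F n t‖ ≤ Real.exp (n - N) * M n := by
  set c : ℝ := Real.exp 1 * (M (N+1) / M N) with hc
  have hcpos : 0 < c := by have := hM N; have := hM (N+1); positivity
  have hct : c * (t - x) ≤ 1 := by
    have h1 : t - x ≤ M N / M (N+1) / Real.exp 1 := by linarith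
    calc c * (t - x) ≤ c * (M N / M (N+1) / Real.exp 1) := by gcongr
      _ = 1 := by
        have := (hM N).ne'; have := (hM (N+1)).ne'; rw [hc]; field_simp
  by_cases hn : N < n
  · refine (hb n t).trans ?_
    have : (1:ℝ) ≤ Real.exp (n - N) := by
      apply Real.one_le_exp
      have : (N : ℝ) ≤ n := by exact_mod_cast hn.le
      linarith
    have := hM n
    nlinarith
  -- downward induction
  have key : ∀ j : ℕ, ∀ n : ℕ, n + j = N + 1 → ∀ s ∈ Set.Icc x t, ‖F n s‖ ≤
      Real.exp (n - (N + 1 : ℝ)) * M n * Real.exp (c * (s - x)) := by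
    intro j
    induction j with
    | zero =>
      intro n hn s hs
      have hn' : (n : ℝ) = N + 1 := by exact_mod_cast hn
      rw [hn', sub_self, Real.exp_zero, one_mul]
      refine (hb n s).trans ?_
      have : (1:ℝ) ≤ Real.exp (c * (s - x)) := Real.one_le_exp (mul_nonneg hcpos.le (by linarith [hs.1]))
      have := hM n
      nlinarith
    | succ j ih =>
      intro n hn
      refine image_norm_le_of_norm_deriv_right_le_deriv_boundary (f' := F (n+1))
        (B' := fun s => c * (Real.exp (n - (N + 1 : ℝ)) * M n * Real.exp (c * (s - x)))) ?_ ?_ ?_ ?_ ?_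
      · exact fun s _ => (hF n s).continuousAt.continuousWithinAt
      · exact fun s _ => (hF n s).hasDerivWithinAt
      · simpa using hx n
      · intro s
        have h1 : HasDerivAt (fun s => c * (s - x)) c s := by
          simpa using ((hasDerivAt_id s).sub_const x).const_mul c
        convert! h1.exp.const_mul (Real.exp (n - (N + 1 : ℝ)) * M n) using 1
        ring
      · intro s hs
        refine (ih (n+1) (by omega) s ⟨hs.1, hs.2.le⟩).trans ?_
        have h2 : M (n+1) ≤ (M (N+1) / M N) * M n := by
          have := hmono n N (by omega)
          rwa [div_le_iff₀ (hM n)] at this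
        have h3 : Real.exp (((n+1 : ℕ) : ℝ) - (N + 1 : ℝ)) = Real.exp 1 * Real.exp (n - (N + 1 : ℝ)) := by
          rw [← Real.exp_add]; congr 1; push_cast; ring
        rw [h3, hc]
        calc _ ≤ Real.exp 1 * Real.exp (n - (N + 1 : ℝ)) * ((M (N+1) / M N) * M n) * Real.exp (Real.exp 1 * (M (N+1) / M N) * (s - x)) := by gcongr
          _ = _ := by ring
  refine (key (N + 1 - n) n (by omega) t ⟨hxt, le_rfl⟩).trans ?_
  have h4 : Real.exp (c * (t - x)) ≤ Real.exp 1 := Real.exp_le_exp.2 hct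
  have h5 : Real.exp ((n:ℝ) - N) = Real.exp (n - (N + 1 : ℝ)) * Real.exp 1 := by
    rw [← Real.exp_add]; congr 1; ring
  rw [h5]
  have := hM n
  calc _ ≤ Real.exp (n - (N + 1 : ℝ)) * M n * Real.exp 1 := by gcongr
    _ = _ := by ring

lemma bang_iter (M : ℕ → ℝ) (hM : ∀ n, 0 < M n)
    (hmono : ∀ m n, m ≤ n → M (m+1) / M m ≤ M (n+1) / M n)
    (F : ℕ → ℝ → ℂ) (hF : ∀ n t, HasDerivAt (F n) (F (n+1) t) t)
    (hb : ∀ n t, ‖F n t‖ ≤ M n) (N j : ℕ) : ∀ (x : ℝ)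
    (_ : ∀ n, ‖F n x‖ ≤ Real.exp (n - (N + j : ℝ)) * M n) (t : ℝ) (_ : x ≤ t)
    (_ : t ≤ x + ∑ k ∈ Finset.range j, M (N + k) / M (N + k + 1) / Real.exp 1) (n : ℕ),
    ‖F n t‖ ≤ Real.exp (n - N) * M n := by
  induction j with
  | zero =>
    intro x hx t hxt ht n
    have : t = x := by simp at ht; linarith
    subst this
    simpa using hx n
  | succ j ih =>
    intro x hx t hxt ht n
    rw [Finset.sum_range_succ] at ht
    have hpos : 0 < M (N + j) / M (N + j + 1) / Real.exp 1 := by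
      have := hM (N + j); have := hM (N + j+1); positivity
    have hpos' : 0 ≤ ∑ k ∈ Finset.range j, M (N + k) / M (N + k + 1) / Real.exp 1 :=
      Finset.sum_nonneg fun k _ => by
        have := hM (N + k); have := hM (N + k+1); positivity
    set y := min t (x + M (N + j) / M (N + j + 1) / Real.exp 1) with hy
    refine ih y ?_ t (min_le_left _ _) ?_ n
    · intro n
      have := bang_step M hM hmono F hF hb (N + j) x ?_ y ?_ ?_ n
      · simpa using this
      · intro n; have := hx n; push_cast at this ⊢; rwa [← add_assoc] at this
      · rw [hy]; exact le_min hxt (by linarith)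
      · exact min_le_right _ _
    · rcases min_choice t (x + M (N + j) / M (N + j + 1) / Real.exp 1) with h | h
      · rw [hy, h]; linarith
      · rw [hy, h]; linarith

lemma denjoy_carleman_nonneg (M : ℕ → ℝ) (hM : ∀ n, 0 < M n)
    (hmono : ∀ m n, m ≤ n → M (m+1) / M m ≤ M (n+1) / M n)
    (hdiv : ¬ Summable fun n => M n / M (n+1))
    (F : ℕ → ℝ → ℂ) (hF : ∀ n t, HasDerivAt (F n) (F (n+1) t) t)
    (hb : ∀ n t, ‖F n t‖ ≤ M n) (h0 : ∀ n, F n 0 = 0) (t : ℝ) (ht : 0 ≤ t) : F 0 t = 0 := by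
  have h : ∀ N : ℕ, ‖F 0 t‖ ≤ Real.exp (-(N:ℝ)) * M 0 := by
    intro N
    have hdiv' : ¬ Summable fun k => M (N + k) / M (N + k + 1) / Real.exp 1 := by
      intro hs
      apply hdiv
      rw [← summable_nat_add_iff N]
      have := hs.mul_right (Real.exp 1)
      refine this.congr fun k => ?_
      rw [add_comm N k]; field_simp
    have hnn : ∀ k, 0 ≤ M (N + k) / M (N + k + 1) / Real.exp 1 := fun k => by
        have := hM (N + k); have := hM (N + k+1); positivity
    obtain ⟨j, hj⟩ := ((not_summable_iff_tendsto_nat_atTop_of_nonneg hnn).1 hdiv').eventually_ge_atTop t |>.exists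
    have := bang_iter M hM hmono F hF hb N j 0 (fun n => by rw [h0, norm_zero]; have := hM n; positivity) t ht (by simpa using hj) 0
    simpa using this
  have hlim : Tendsto (fun N : ℕ => Real.exp (-(N:ℝ)) * M 0) atTop (𝓝 0) := by
    have := (Real.tendsto_exp_neg_atTop_nhds_zero.comp tendsto_natCast_atTop_atTop).mul_const (M 0)
    simpa using this
  have := ge_of_tendsto' hlim h
  exact norm_le_zero_iff.1 this

lemma denjoy_carleman (M : ℕ → ℝ) (hM : ∀ n, 0 < M n)
    (hmono : ∀ m n, m ≤ n → M (m+1) / M m ≤ M (n+1) / M n)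
    (hdiv : ¬ Summable fun n => M n / M (n+1)) (C : ℝ)
    (F : ℕ → ℝ → ℂ) (hF : ∀ n t, HasDerivAt (F n) (F (n+1) t) t)
    (hb : ∀ n t, ‖F n t‖ ≤ C * M n) (h0 : ∀ n, F n 0 = 0) (t : ℝ) : F 0 t = 0 := by
  wlog hC : 0 < C generalizing C
  · refine this 1 (fun n t => (hb n t).trans ?_) one_pos
    have := hM n
    gcongr; linarith
  have h1 : ∀ a b : ℝ, (C * a) / (C * b) = a / b := fun a b => mul_div_mul_left a b hC.ne'
  rcases le_total 0 t with ht | ht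
  · exact denjoy_carleman_nonneg (fun n => C * M n) (fun n => mul_pos hC (hM n))
      (by simpa only [h1] using hmono) (by simpa only [h1] using hdiv) F hF hb h0 t ht
  · have := denjoy_carleman_nonneg (fun n => C * M n) (fun n => mul_pos hC (hM n))
      (by simpa only [h1] using hmono) (by simpa only [h1] using hdiv)
      (fun n t => (-1)^n * F n (-t)) ?_ ?_ ?_ (-t) (by linarith)
    · simpa using this
    · intro n t
      have := ((hF n (-t)).scomp t (hasDerivAt_neg t)).const_mul ((-1 : ℂ)^n)
      convert! this using 1
      simp; ring
    · intro n t; simpa using hb n (-t)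
    · intro n; simp [h0]

lemma carleman_ineq (a : ℕ → ℝ) (ha : ∀ n, 0 ≤ a n) (hs : Summable a) :
    Summable fun n : ℕ => (∏ k ∈ Finset.range (n+1), a k) ^ (1 / ((n:ℝ)+1)) := by
  set c : ℕ → ℝ := fun k => (k+1) * a k with hc
  have hcn : ∀ k, 0 ≤ c k := fun k => mul_nonneg (by positivity) (ha k)
  have hbound : ∀ N : ℕ, ∑ n ∈ Finset.range N, (∑ k ∈ Finset.range (n+1), c k) / ((n:ℝ)+1)^2
      + 2 * (∑ k ∈ Finset.range N, c k) / ((N:ℝ)+1) ≤ 2 * ∑ k ∈ Finset.range N, a k := by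
    intro N
    induction N with
    | zero => simp
    | succ N ih =>
      rw [Finset.sum_range_succ, Finset.sum_range_succ a]
      have hCn : 0 ≤ ∑ k ∈ Finset.range (N+1), c k := Finset.sum_nonneg fun k _ => hcn k
      set C := ∑ k ∈ Finset.range (N+1), c k with hC
      have hC' : C = ∑ k ∈ Finset.range N, c k + (N+1) * a N := by rw [hC, Finset.sum_range_succ]
      have h1 : C / ((N:ℝ)+1)^2 + 2 * C / (((N+1 : ℕ):ℝ)+1) ≤ 2 * C / ((N:ℝ)+1) := by
        have : 2 * C / ((N:ℝ)+1) - (C / ((N:ℝ)+1)^2 + 2 * C / (((N+1 : ℕ):ℝ)+1)) = C * N / (((N:ℝ)+1)^2 * (N+2)) := by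
          push_cast
          field_simp
          ring
        have h2 : 0 ≤ C * N / (((N:ℝ)+1)^2 * (N+2)) := by positivity
        linarith
      have h3 : 2 * C / ((N:ℝ)+1) = 2 * (∑ k ∈ Finset.range N, c k) / ((N:ℝ)+1) + 2 * a N := by
        rw [hC']; field_simp
      linarith
  have hterm : ∀ n : ℕ, (∏ k ∈ Finset.range (n+1), a k) ^ (1 / ((n:ℝ)+1)) ≤
      Real.exp 1 * ((∑ k ∈ Finset.range (n+1), c k) / ((n:ℝ)+1)^2) := by
    intro n
    have hn : (0:ℝ) < n + 1 := by positivity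
    have h1 := Real.geom_mean_le_arith_mean (Finset.range (n+1)) (fun _ => (1:ℝ)) c (by simp) (by simp; positivity) (fun i _ => hcn i)
    simp only [Real.rpow_one, Finset.sum_const, Finset.card_range, nsmul_eq_mul, mul_one, one_mul] at h1
    push_cast at h1
    have h2 : ∏ k ∈ Finset.range (n+1), c k = ((n+1).factorial : ℝ) * ∏ k ∈ Finset.range (n+1), a k := by
      rw [hc, Finset.prod_mul_distrib, ← Finset.prod_range_add_one_eq_factorial]
      push_cast; rfl
    have hpa : 0 ≤ ∏ k ∈ Finset.range (n+1), a k := Finset.prod_nonneg fun k _ => ha k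
    rw [h2, Real.mul_rpow (by positivity) hpa] at h1
    have h3 : ((n:ℝ)+1) / Real.exp 1 ≤ ((n+1).factorial : ℝ) ^ ((n:ℝ)+1)⁻¹ := by
      rw [Real.le_rpow_inv_iff_of_pos (by positivity) (by positivity) hn]
      have := Real.pow_div_factorial_le_exp ((n:ℝ)+1) hn.le (n+1)
      have e1 : ((n:ℝ)+1) = ((n+1 : ℕ) : ℝ) := by push_cast; rfl
      rw [Real.div_rpow hn.le (by positivity), ← Real.exp_mul, one_mul, div_le_iff₀ (by positivity)]
      rw [div_le_iff₀ (by positivity)] at this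
      rw [← Real.rpow_natCast] at this
      rw [mul_comm]
      push_cast at this
      exact this
    rw [one_div]
    set p := (∏ k ∈ Finset.range (n+1), a k) ^ ((n:ℝ)+1)⁻¹ with hp
    have hp0 : 0 ≤ p := Real.rpow_nonneg hpa _
    have h4 : ((n:ℝ)+1) / Real.exp 1 * p ≤ (∑ k ∈ Finset.range (n+1), c k) / ((n:ℝ)+1) :=
      (mul_le_mul_of_nonneg_right h3 hp0).trans h1
    have h5 : p = (Real.exp 1 / (n+1)) * (((n:ℝ)+1) / Real.exp 1 * p) := by field_simp
    rw [h5]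
    calc _ ≤ (Real.exp 1 / (n+1)) * ((∑ k ∈ Finset.range (n+1), c k) / ((n:ℝ)+1)) := by gcongr
      _ = _ := by field_simp
  have hs2 : Summable fun n : ℕ => (∑ k ∈ Finset.range (n+1), c k) / ((n:ℝ)+1)^2 := by
    refine summable_of_sum_range_le (c := 2 * ∑' k, a k) (fun n => ?_) fun N => ?_
    · exact div_nonneg (Finset.sum_nonneg fun k _ => hcn k) (by positivity)
    · have h1 : 0 ≤ 2 * (∑ k ∈ Finset.range N, c k) / ((N:ℝ)+1) :=
        div_nonneg (mul_nonneg two_pos.le (Finset.sum_nonneg fun k _ => hcn k)) (by positivity)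
      have h2 := hs.sum_le_tsum (Finset.range N) (fun k _ => ha k)
      linarith [hbound N]
  refine Summable.of_nonneg_of_le (fun n => Real.rpow_nonneg (Finset.prod_nonneg fun k _ => ha k) _) hterm (hs2.mul_left _)

lemma carleman_moments (ν : Measure ℝ) [IsProbabilityMeasure ν]
    (hi : ∀ m : ℕ, Integrable (fun t : ℝ => |t| ^ m) ν) (hC : Carleman ν) :
    (∀ n, 0 < √(∫ t, |t| ^ (2 * n) ∂ν)) ∧
    (∀ m n, m ≤ n → √(∫ t, |t| ^ (2 * (m+1)) ∂ν) / √(∫ t, |t| ^ (2 * m) ∂ν) ≤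
       √(∫ t, |t| ^ (2 * (n+1)) ∂ν) / √(∫ t, |t| ^ (2 * n) ∂ν)) ∧
    ¬ Summable (fun n => √(∫ t, |t| ^ (2 * n) ∂ν) / √(∫ t, |t| ^ (2 * (n+1)) ∂ν)) := by
  set m : ℕ → ℝ := fun n => ∫ t, |t| ^ (2 * n) ∂ν with hm
  have hpos : ∀ n, 0 < m n := by
    intro n
    have h0 : 0 ≤ m n := integral_nonneg fun t => by positivity
    refine lt_of_le_of_ne h0 fun h => hC ?_
    have h1 : (fun t : ℝ => |t| ^ (2 * n)) =ᵐ[ν] 0 :=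
      (integral_eq_zero_iff_of_nonneg (fun t => by positivity) (hi _)).1 h.symm
    have h2 : ∀ᵐ t ∂ν, t = 0 := by
      filter_upwards [h1] with t ht
      have := eq_zero_of_pow_eq_zero ht
      simpa using this
    have h3 : ∀ k : ℕ, ∫ t, |t| ^ (2 * (k + 1)) ∂ν = 0 := by
      intro k
      apply integral_eq_zero_of_ae
      filter_upwards [h2] with t ht
      simp [ht]
    refine summable_zero.congr fun k => ?_
    rw [h3, Real.zero_rpow]
    have : (0:ℝ) < 2 * (k+1) := by positivity
    have : (0:ℝ) < 1 / (2 * (k+1)) := by positivity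
    linarith
  have hlc : ∀ n, m (n+1) / m n ≤ m (n+2) / m (n+1) := by
    intro n
    set l := m (n+1) / m n with hl
    have h1 : 0 ≤ ∫ t, |t| ^ (2 * n) * (t^2 - l)^2 ∂ν := integral_nonneg fun t => by positivity
    have h2 : ∫ t, |t| ^ (2 * n) * (t^2 - l)^2 ∂ν = m (n+2) - 2 * l * m (n+1) + l^2 * m n := by
      rw [hm]
      simp only
      rw [← integral_const_mul, ← integral_const_mul, ← integral_sub (hi _) ((hi _).const_mul _),
        ← integral_add (by exact (hi _).sub ((hi _).const_mul _)) ((hi _).const_mul _)]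
      congr 1
      ext t
      rw [← sq_abs t]
      ring
    rw [le_div_iff₀ (hpos _)]
    have h3 : l * m n = m (n+1) := div_mul_cancel₀ _ (hpos n).ne'
    have h4 : l ^ 2 * m n = l * m (n+1) := by rw [← h3]; ring
    linarith
  have hmono : Monotone fun n => m (n+1) / m n := monotone_nat_of_le_succ hlc
  refine ⟨fun n => Real.sqrt_pos.2 (hpos n), fun i j hij => ?_, fun hs => hC ?_⟩
  · change √(m (i+1)) / √(m i) ≤ √(m (j+1)) / √(m j)
    rw [← Real.sqrt_div (hpos _).le, ← Real.sqrt_div (hpos _).le]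
    exact Real.sqrt_le_sqrt (hmono hij)
  · have h1 := carleman_ineq _ (fun n => by positivity) hs
    refine h1.congr fun n => ?_
    change (∏ k ∈ Finset.range (n+1), √(m k) / √(m (k+1))) ^ (1 / ((n:ℝ)+1)) = m (n+1) ^ (-(1 / (2 * (n + 1) : ℝ)))
    have hp : ∀ N : ℕ, ∏ k ∈ Finset.range N, √(m k) / √(m (k+1)) = √(m 0) / √(m N) := by
      intro N
      induction N with
      | zero => simp [(Real.sqrt_pos.2 (hpos 0)).ne']
      | succ N ih =>
        rw [Finset.prod_range_succ, ih]
        have := (Real.sqrt_pos.2 (hpos N)).ne'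
        field_simp
    rw [hp]
    have h0 : m 0 = 1 := by simp [hm]
    rw [h0, Real.sqrt_one, one_div, Real.sqrt_eq_rpow, ← Real.rpow_neg (hpos _).le, ← Real.rpow_mul (hpos _).le]
    congr 1
    field_simp

lemma mv_null (n : ℕ) : ∀ (p : MvPolynomial (Fin n) ℝ) (_ : p ≠ 0),
    ∀ᵐ y : Fin n → ℝ, MvPolynomial.eval y p ≠ 0 := by
  induction n with
  | zero =>
    intro p hp
    refine .of_forall fun y h => hp ?_
    rw [MvPolynomial.eq_C_of_isEmpty p] at h ⊢
    simpa using h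
  | succ n ih =>
    intro p hp
    set f := MvPolynomial.finSuccEquiv ℝ n p with hf
    have hf0 : f ≠ 0 := by simpa [hf] using hp
    have hq := ih f.leadingCoeff (by simpa using hf0)
    have hmp := (volume_preserving_piFinSuccAbove (fun _ : Fin (n+1) => ℝ) 0)
    have hmeas : MeasurableSet {z : ℝ × (Fin n → ℝ) | MvPolynomial.eval (Fin.cons z.1 z.2 : Fin (n+1) → ℝ) p ≠ 0} := by
      apply MeasurableSet.compl
      apply measurableSet_eq_fun _ measurable_const
      have h1 : Continuous fun y : Fin (n+1) → ℝ => MvPolynomial.eval y p := MvPolynomial.continuous_eval p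
      have h2 : Continuous fun z : ℝ × (Fin n → ℝ) => (Fin.cons z.1 z.2 : Fin (n+1) → ℝ) := by
        fun_prop
      exact (h1.comp h2).measurable
    have h1 : ∀ᵐ z : ℝ × (Fin n → ℝ), z ∈ {z : ℝ × (Fin n → ℝ) | MvPolynomial.eval (Fin.cons z.1 z.2 : Fin (n+1) → ℝ) p ≠ 0} := by
      refine (Measure.ae_prod_mem_iff_ae_ae_mem hmeas).2 ?_
      refine (Measure.ae_ae_comm hmeas).2 ?_
      filter_upwards [hq] with y hy
      set g := f.map (MvPolynomial.eval y) with hg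
      have hg0 : g ≠ 0 := by
        intro h
        apply hy
        have := congrArg (fun r => r.coeff f.natDegree) h
        simpa [hg, Polynomial.coeff_map] using this
      have hfin : ({a | g.IsRoot a}).Finite := Polynomial.finite_setOfPred_isRoot hg0
      filter_upwards [hfin.countable.ae_notMem volume] with a ha
      intro h
      apply ha
      rw [MvPolynomial.eval_eq_eval_mv_eval'] at h
      exact h
    have h2 := hmp.quasiMeasurePreserving.ae h1
    filter_upwards [h2] with y hy
    have : (Fin.cons (y 0) (fun i => y (Fin.succ i)) : Fin (n+1) → ℝ) = y := Fin.cons_self_tail y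
    rw [← this]
    exact hy

lemma normalize_lip {E : Type*} [NormedAddCommGroup E] [NormedSpace ℝ E] (x y : E)
    (hx : 1 ≤ ‖x‖) (hy : 1 ≤ ‖y‖) : ‖‖x‖⁻¹ • x - ‖y‖⁻¹ • y‖ ≤ 2 * ‖x - y‖ := by
  have hx0 : 0 < ‖x‖ := by linarith
  have hy0 : 0 < ‖y‖ := by linarith
  have h1 : ‖x‖⁻¹ • x - ‖y‖⁻¹ • y = ‖x‖⁻¹ • (x - y) + (‖x‖⁻¹ - ‖y‖⁻¹) • y := by
    module
  rw [h1]
  refine (norm_add_le _ _).trans ?_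
  rw [norm_smul, norm_smul]
  have h2 : ‖x‖⁻¹ ≤ 1 := inv_le_one_of_one_le₀ hx
  have h3 : ‖‖x‖⁻¹ - ‖y‖⁻¹‖ * ‖y‖ = ‖x‖⁻¹ * |‖y‖ - ‖x‖| := by
    have : ‖x‖⁻¹ - ‖y‖⁻¹ = ‖x‖⁻¹ * ‖y‖⁻¹ * (‖y‖ - ‖x‖) := by field_simp
    rw [this, norm_mul, norm_mul, Real.norm_eq_abs, Real.norm_eq_abs, Real.norm_eq_abs, abs_of_pos (inv_pos.2 hx0), abs_of_pos (inv_pos.2 hy0)]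
    field_simp
  rw [h3]
  have h4 : |‖y‖ - ‖x‖| ≤ ‖x - y‖ := by rw [norm_sub_rev]; exact abs_norm_sub_norm_le y x
  have h5 : ‖‖x‖⁻¹‖ ≤ 1 := by rwa [norm_inv, norm_norm]
  have := norm_nonneg (x - y)
  have := abs_nonneg (‖y‖ - ‖x‖)
  nlinarith [inv_pos.2 hx0]

noncomputable def chart (n : ℕ) (i : Fin (n+1)) (y : Fin n → ℝ) : EuclideanSpace ℝ (Fin (n+1)) :=
  WithLp.toLp 2 (i.insertNth (α := fun _ => ℝ) 1 y)

lemma chart_norm (n : ℕ) (i : Fin (n+1)) (y : Fin n → ℝ) : 1 ≤ ‖chart n i y‖ := by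
  have := PiLp.norm_apply_le (chart n i y) i
  simpa [chart] using this

lemma chart_lip (n : ℕ) (i : Fin (n+1)) : ∃ K, LipschitzWith K (chart n i) := by
  refine ⟨_ * 1, (PiLp.lipschitzWith_toLp 2 (fun _ : Fin (n+1) => ℝ)).comp ?_⟩
  refine LipschitzWith.of_dist_le_mul fun y z => ?_
  rw [NNReal.coe_one, one_mul, dist_pi_le_iff dist_nonneg]
  intro j
  refine Fin.succAboveCases i ?_ (fun j => ?_) j
  · simp
  · simpa using dist_le_pi_dist y z j

lemma sphere_poly (n : ℕ) (A : Set (EuclideanSpace ℝ (Fin (n+1))))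
    (hAs : A ⊆ Metric.sphere (0 : EuclideanSpace ℝ (Fin (n+1))) 1)
    (hApos : 0 < μH[(n : ℝ)] A) (p : MvPolynomial (Fin (n+1)) ℝ) (m : ℕ)
    (hp : ∀ (c : ℝ) (u : Fin (n+1) → ℝ), MvPolynomial.eval (c • u) p = c ^ m * MvPolynomial.eval u p)
    (h0 : ∀ u ∈ A, MvPolynomial.eval (fun i => u i) p = 0) : p = 0 := by
  by_contra hne
  set Z : Fin (n+1) → Set (Fin n → ℝ) := fun i =>
    {y | MvPolynomial.eval (i.insertNth (α := fun _ => ℝ) 1 y) p = 0} with hZ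
  have hq : ∀ i, volume (Z i) = 0 := by
    intro i
    set q : MvPolynomial (Fin n) ℝ := MvPolynomial.aeval
      (i.insertNth (α := fun _ => MvPolynomial (Fin n) ℝ) 1 MvPolynomial.X) p with hq
    have hqe : ∀ y, MvPolynomial.eval y q = MvPolynomial.eval (i.insertNth (α := fun _ => ℝ) 1 y) p := by
      intro y
      have h1 : (MvPolynomial.eval y).comp (MvPolynomial.aeval (R := ℝ)
         (i.insertNth (α := fun _ => MvPolynomial (Fin n) ℝ) 1 MvPolynomial.X)).toRingHom =
        MvPolynomial.eval (i.insertNth (α := fun _ => ℝ) 1 y) := by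
        apply MvPolynomial.ringHom_ext
        · intro r; simp
        · intro j
          refine Fin.succAboveCases i ?_ (fun j => ?_) j <;> simp
      exact congrArg (fun f => f p) h1
    have hq0 : q ≠ 0 := by
      intro h
      apply hne
      have h2 : MvPolynomial.X i * p = 0 := by
        apply MvPolynomial.funext
        intro u
        simp only [map_mul, MvPolynomial.eval_X, map_zero, mul_eq_zero]
        by_cases hu : u i = 0
        · exact Or.inl hu
        right
        have h3 : u = u i • (i.insertNth (α := fun _ => ℝ) 1 (fun j => u (i.succAbove j) / u i) : Fin (n+1) → ℝ) := by
          ext j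
          refine Fin.succAboveCases i ?_ (fun j => ?_) j
          · simp
          · simp; field_simp
        rw [h3, hp, ← hqe, h]; simp
      exact (mul_eq_zero.1 h2).resolve_left (MvPolynomial.X_ne_zero i)
    have := mv_null n q hq0
    rw [ae_iff] at this
    simpa [hZ, hqe] using this
  have hcov : A ⊆ ⋃ i, (((fun y => ‖chart n i y‖⁻¹ • chart n i y) '' Z i) ∪
      ((fun y => -(‖chart n i y‖⁻¹ • chart n i y)) '' Z i)) := by
    intro u hu
    have hu1 : ‖u‖ = 1 := by simpa using hAs hu
    have : ∃ i, u i ≠ 0 := by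
      by_contra! h
      have : u = 0 := by ext i; simpa using h i
      rw [this] at hu1; simp at hu1
    obtain ⟨i, hi⟩ := this
    set y : Fin n → ℝ := fun j => u (i.succAbove j) / u i with hy
    have h3 : u = u i • chart n i y := by
      ext j
      refine Fin.succAboveCases i ?_ (fun j => ?_) j
      · simp [chart]
      · simp [chart, hy]; field_simp
    have hyZ : y ∈ Z i := by
      have h4 := h0 u hu
      have h5 : (fun j => u j) = u i • (i.insertNth (α := fun _ => ℝ) 1 y : Fin (n+1) → ℝ) := by
        ext j
        exact congrArg (fun w : EuclideanSpace ℝ (Fin (n+1)) => w j) h3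
      rw [h5, hp] at h4
      exact (mul_eq_zero.1 h4).resolve_left (pow_ne_zero _ hi)
    have hn : |u i| * ‖chart n i y‖ = 1 := by
      rw [← Real.norm_eq_abs, ← norm_smul, ← h3, hu1]
    have hn' : ‖chart n i y‖⁻¹ = |u i| := (eq_inv_of_mul_eq_one_left hn).symm
    refine Set.mem_iUnion.2 ⟨i, ?_⟩
    rcases le_total 0 (u i) with h | h
    · left
      refine ⟨y, hyZ, ?_⟩
      simp only [hn', abs_of_nonneg h]; exact h3.symm
    · right
      refine ⟨y, hyZ, ?_⟩
      simp only [hn', abs_of_nonpos h, neg_smul, neg_neg]; exact h3.symm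
  have hnull : ∀ i, μH[(n:ℝ)] (Z i) = 0 := by
    intro i
    have := @hausdorffMeasure_pi_real (Fin n) _
    rw [Fintype.card_fin] at this
    rw [this]; exact hq i
  have hA0 : μH[(n:ℝ)] A = 0 := by
    refine measure_mono_null hcov (measure_iUnion_null fun i => measure_union_null ?_ ?_)
    all_goals
      obtain ⟨K, hK⟩ := chart_lip n i
      have hl : LipschitzWith (2 * K) (fun y => ‖chart n i y‖⁻¹ • chart n i y) := by
        refine LipschitzWith.of_dist_le_mul fun y z => ?_
        have h1 := normalize_lip _ _ (chart_norm n i y) (chart_norm n i z)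
        have h2 := hK.dist_le_mul y z
        rw [dist_eq_norm] at h2 ⊢
        push_cast
        linarith
    · have := hl.hausdorffMeasure_image_le (d := n) (by positivity) (Z i)
      rw [hnull, mul_zero] at this
      exact le_antisymm this (zero_le)
    · have := hl.neg.hausdorffMeasure_image_le (d := n) (by positivity) (Z i)
      rw [hnull, mul_zero] at this
      exact le_antisymm this (zero_le)
  exact hApos.ne' hA0

noncomputable def pev {d : ℕ} (p : MvPolynomial (Fin d) ℝ) (x : EuclideanSpace ℝ (Fin d)) : ℝ :=
  MvPolynomial.eval (fun i => x i) p

noncomputable def lin {d : ℕ} (v : EuclideanSpace ℝ (Fin d)) : MvPolynomial (Fin d) ℝ :=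
  ∑ i, MvPolynomial.C (v i) * MvPolynomial.X i

lemma pev_lin {d : ℕ} (v x : EuclideanSpace ℝ (Fin d)) : pev (lin v) x = ⟪v, x⟫_ℝ := by
  simp [pev, lin, PiLp.inner_apply, mul_comm]

lemma pev_cont {d : ℕ} (p : MvPolynomial (Fin d) ℝ) : Continuous (pev p) := by
  have h := MvPolynomial.continuous_eval p
  exact h.comp (by fun_prop)

def AllMom {d : ℕ} (P : Measure (EuclideanSpace ℝ (Fin d))) : Prop :=
  ∀ (p : MvPolynomial (Fin d) ℝ), Integrable (pev p) P

lemma allMom_of {d : ℕ} (P : Measure (EuclideanSpace ℝ (Fin d))) [IsProbabilityMeasure P]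
    (A : Set (EuclideanSpace ℝ (Fin d))) (hspan : Submodule.span ℝ A = ⊤)
    (h : ∀ v ∈ A, ∀ m : ℕ, Integrable (fun t : ℝ => |t| ^ m) (P.map (fun x => ⟪v, x⟫_ℝ))) :
    AllMom P := by
  have h1 : ∀ u : EuclideanSpace ℝ (Fin d), ∀ q : ℕ, MemLp (fun x => ⟪u, x⟫_ℝ) q P := by
    intro u q
    have hu : u ∈ Submodule.span ℝ A := by rw [hspan]; trivial
    induction hu using Submodule.span_induction with
    | mem v hv =>
      by_cases hq : q = 0
      · subst hq
        simp only [Nat.cast_zero, memLp_zero_iff_aestronglyMeasurable]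
        fun_prop
      · rw [← integrable_norm_rpow_iff (by fun_prop) (by simpa using hq) (by simp)]
        have := (integrable_map_measure (by fun_prop) (by fun_prop)).1 (h v hv q)
        simpa [Function.comp_def] using this
    | zero => simp
    | add x y _ _ hx hy => simp only [inner_add_left]; exact hx.add hy
    | smul a x _ hx => simp only [real_inner_smul_left]; exact hx.const_mul _
  have h2 : ∀ p : MvPolynomial (Fin d) ℝ, ∀ q : ℕ, MemLp (pev p) q P := by
    intro p
    induction p using MvPolynomial.induction_on with
    | C a =>
      intro q
      have : pev (d := d) (MvPolynomial.C a) = fun _ => a := by ext x; simp [pev]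
      rw [this]; exact memLp_const a
    | add p r hp hr =>
      intro q
      have : pev (p + r) = pev p + pev r := by ext x; simp [pev]
      rw [this]; exact (hp q).add (hr q)
    | mul_X p i hp =>
      intro q
      have : pev (p * MvPolynomial.X i) = pev p * (fun x => ⟪EuclideanSpace.single i (1:ℝ), x⟫_ℝ) := by
        ext x; simp [pev, EuclideanSpace.inner_single_left]
      rw [this]
      have hH : ENNReal.HolderTriple ((2 * q : ℕ) : ℝ≥0∞) ((2 * q : ℕ) : ℝ≥0∞) (q : ℝ≥0∞) := by
        constructor
        push_cast
        rw [ENNReal.mul_inv (by simp) (by simp), ← add_mul, ENNReal.inv_two_add_inv_two, one_mul]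
      exact (h1 _ (2 * q)).mul (hp (2*q))
  intro p
  have := h2 p 1
  rwa [Nat.cast_one, memLp_one_iff_integrable] at this

lemma moments_eq {n : ℕ} (P Q : Measure (EuclideanSpace ℝ (Fin (n+1))))
    (A : Set (EuclideanSpace ℝ (Fin (n+1))))
    (hAs : A ⊆ Metric.sphere (0 : EuclideanSpace ℝ (Fin (n+1))) 1)
    (hApos : 0 < μH[(n : ℝ)] A) (hP : AllMom P) (hQ : AllMom Q)
    (h : ∀ v ∈ A, P.map (fun x => ⟪v, x⟫_ℝ) = Q.map (fun x => ⟪v, x⟫_ℝ))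
    (p : MvPolynomial (Fin (n+1)) ℝ) : ∫ x, pev p x ∂P = ∫ x, pev p x ∂Q := by
  classical
  have hmono : ∀ (k : Fin (n+1) →₀ ℕ), ∫ x, pev (MvPolynomial.monomial k 1) x ∂P = ∫ x, pev (MvPolynomial.monomial k 1) x ∂Q := by
    intro k0
    set m := ∑ i, k0 i with hm
    -- multinomial expansion
    have hexp : ∀ (v x : EuclideanSpace ℝ (Fin (n+1))), ⟪v, x⟫_ℝ ^ m =
        ∑ k ∈ Finset.piAntidiag Finset.univ m, (Nat.multinomial Finset.univ k : ℝ) * (∏ i, v i ^ k i) *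
          pev (MvPolynomial.monomial (Finsupp.equivFunOnFinite.symm k) 1) x := by
      intro v x
      rw [← pev_lin]
      simp only [pev, lin, map_sum, map_mul, MvPolynomial.eval_C, MvPolynomial.eval_X]
      rw [Finset.sum_pow_eq_sum_piAntidiag]
      refine Finset.sum_congr rfl fun k _ => ?_
      rw [MvPolynomial.eval_monomial, Finsupp.prod_fintype _ _ (by simp)]
      simp only [mul_pow, Finset.prod_mul_distrib]
      simp [mul_assoc]
    set D : (Fin (n+1) → ℕ) → ℝ := fun k =>
      ∫ x, pev (MvPolynomial.monomial (Finsupp.equivFunOnFinite.symm k) 1) x ∂P -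
      ∫ x, pev (MvPolynomial.monomial (Finsupp.equivFunOnFinite.symm k) 1) x ∂Q with hD
    set r : MvPolynomial (Fin (n+1)) ℝ := ∑ k ∈ Finset.piAntidiag Finset.univ m,
      MvPolynomial.monomial (Finsupp.equivFunOnFinite.symm k) ((Nat.multinomial Finset.univ k : ℝ) * D k) with hr
    have hre : ∀ u : Fin (n+1) → ℝ, MvPolynomial.eval u r = ∑ k ∈ Finset.piAntidiag Finset.univ m,
        (Nat.multinomial Finset.univ k : ℝ) * D k * ∏ i, u i ^ k i := by
      intro u
      rw [hr, map_sum]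
      refine Finset.sum_congr rfl fun k _ => ?_
      rw [MvPolynomial.eval_monomial, Finsupp.prod_fintype _ _ (by simp)]
      simp
    have h_integ : ∀ (μ : Measure (EuclideanSpace ℝ (Fin (n+1)))) (_ : AllMom μ) (v : EuclideanSpace ℝ (Fin (n+1))), ∫ x, ⟪v, x⟫_ℝ ^ m ∂μ =
        ∑ k ∈ Finset.piAntidiag Finset.univ m, (Nat.multinomial Finset.univ k : ℝ) * (∏ i, v i ^ k i) *
          ∫ x, pev (MvPolynomial.monomial (Finsupp.equivFunOnFinite.symm k) 1) x ∂μ := by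
      intro μ hR v
      simp_rw [hexp]
      rw [integral_finsetSum _ (fun k _ => (hR _).const_mul _)]
      simp_rw [integral_const_mul]
    have hr0 : r = 0 := by
      refine sphere_poly n A hAs hApos r m ?_ ?_
      · intro c u
        rw [hre, hre, Finset.mul_sum]
        refine Finset.sum_congr rfl fun k hk => ?_
        simp only [Pi.smul_apply, smul_eq_mul, mul_pow, Finset.prod_mul_distrib]
        rw [Finset.prod_pow_eq_pow_sum, (Finset.mem_piAntidiag.1 hk).1]
        ring
      · intro u hu
        have h1 : ∫ x, ⟪u, x⟫_ℝ ^ m ∂P = ∫ x, ⟪u, x⟫_ℝ ^ m ∂Q := by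
          have hP1 := integral_map (μ := P) (φ := fun x => ⟪u, x⟫_ℝ) (by fun_prop) (f := fun t : ℝ => t ^ m) (by fun_prop)
          have hQ1 := integral_map (μ := Q) (φ := fun x => ⟪u, x⟫_ℝ) (by fun_prop) (f := fun t : ℝ => t ^ m) (by fun_prop)
          rw [← hP1, ← hQ1, h u hu]
        rw [h_integ P hP, h_integ Q hQ, ← sub_eq_zero, ← Finset.sum_sub_distrib] at h1
        rw [hre, ← h1]
        refine Finset.sum_congr rfl fun k _ => ?_
        rw [hD]; ring
    have hc := congrArg (MvPolynomial.coeff k0) hr0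
    rw [hr, MvPolynomial.coeff_sum, Finset.sum_eq_single (k0 : Fin (n+1) → ℕ)] at hc
    · simp only [Finsupp.equivFunOnFinite_symm_coe, MvPolynomial.coeff_monomial, if_true, MvPolynomial.coeff_zero, mul_eq_zero] at hc
      rcases hc with hc | hc
      · have := Nat.multinomial_pos Finset.univ (k0 : Fin (n+1) → ℕ)
        norm_cast at hc; omega
      · simp only [hD, Finsupp.equivFunOnFinite_symm_coe] at hc
        linarith
    · intro k _ hk
      rw [MvPolynomial.coeff_monomial, if_neg]
      intro h; apply hk; rw [← h]; ext i; simp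
    · intro hk; exfalso; apply hk
      rw [Finset.mem_piAntidiag]; exact ⟨hm.symm, by simp⟩
  induction p using MvPolynomial.induction_on' with
  | monomial k a =>
    have : ∀ x, pev (MvPolynomial.monomial k a) x = a * pev (MvPolynomial.monomial k 1) x := by
      intro x; simp [pev, MvPolynomial.eval_monomial]
    simp_rw [this]
    rw [integral_const_mul, integral_const_mul, hmono]
  | add p q hp hq =>
    have : ∀ x, pev (p + q) x = pev p x + pev q x := by
      intro x; simp [pev]
    simp_rw [this]
    rw [integral_add (hP _) (hP _), integral_add (hQ _) (hQ _), hp, hq]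

noncomputable def Jint {d : ℕ} (P : Measure (EuclideanSpace ℝ (Fin d))) (p : MvPolynomial (Fin d) ℝ)
    (w : EuclideanSpace ℝ (Fin d)) : ℂ :=
  ∫ x, (pev p x : ℂ) * Complex.exp (⟪w, x⟫_ℝ * Complex.I) ∂P

lemma Jint_deriv {d : ℕ} (P : Measure (EuclideanSpace ℝ (Fin d))) (hP : AllMom P)
    (p : MvPolynomial (Fin d) ℝ) (w v : EuclideanSpace ℝ (Fin d)) (t : ℝ) :
    HasDerivAt (fun t : ℝ => Jint P p (w + t • v)) (Complex.I * Jint P (p * lin v) (w + t • v)) t := by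
  have hc := fun p : MvPolynomial (Fin d) ℝ => pev_cont p
  have hcont : ∀ (p : MvPolynomial (Fin d) ℝ) (w : EuclideanSpace ℝ (Fin d)), Continuous
      (fun x => (pev p x : ℂ) * Complex.exp (⟪w, x⟫_ℝ * Complex.I)) := by
    intro p w
    have := hc p
    fun_prop
  have hnorm : ∀ (p : MvPolynomial (Fin d) ℝ) (w x : EuclideanSpace ℝ (Fin d)),
      ‖(pev p x : ℂ) * Complex.exp (⟪w, x⟫_ℝ * Complex.I)‖ = |pev p x| := by
    intro p w x
    rw [norm_mul, Complex.norm_exp_ofReal_mul_I, mul_one, Complex.norm_real, Real.norm_eq_abs]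
  have h_integ : ∀ (p : MvPolynomial (Fin d) ℝ) (w : EuclideanSpace ℝ (Fin d)), Integrable
      (fun x => (pev p x : ℂ) * Complex.exp (⟪w, x⟫_ℝ * Complex.I)) P := by
    intro p w
    refine (hP p).abs.mono' (hcont p w).aestronglyMeasurable (.of_forall fun x => (hnorm p w x).le)
  have := hasDerivAt_integral_of_dominated_loc_of_deriv_le (μ := P) (s := Set.univ) (x₀ := t)
    (F := fun t x => (pev p x : ℂ) * Complex.exp (⟪w + t • v, x⟫_ℝ * Complex.I))
    (F' := fun t x => Complex.I * ((pev (p * lin v) x : ℂ) * Complex.exp (⟪w + t • v, x⟫_ℝ * Complex.I)))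
    (bound := fun x => |pev (p * lin v) x|) univ_mem
    (.of_forall fun t => (hcont p _).aestronglyMeasurable) (h_integ p _)
    ((h_integ _ _).const_mul _).aestronglyMeasurable
    (.of_forall fun x t _ => by rw [norm_mul, Complex.norm_I, one_mul, hnorm]) (hP _).abs
    (.of_forall fun x t _ => by
      have h1 : HasDerivAt (fun t : ℝ => ((⟪w + t • v, x⟫_ℝ : ℝ) : ℂ) * Complex.I) ((⟪v, x⟫_ℝ : ℝ) * Complex.I) t := by
        have h2 : HasDerivAt (fun t : ℝ => ⟪w + t • v, x⟫_ℝ) ⟪v, x⟫_ℝ t := by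
          simp only [inner_add_left, real_inner_smul_left]
          simpa using ((hasDerivAt_id t).mul_const ⟪v, x⟫_ℝ).const_add ⟪w, x⟫_ℝ
        exact h2.ofReal_comp.mul_const _
      convert! h1.cexp.const_mul (pev p x : ℂ) using 1
      have : pev (p * lin v) x = pev p x * ⟪v, x⟫_ℝ := by rw [← pev_lin]; simp [pev]
      rw [this]; push_cast; ring)
  have h2 := this.2
  rw [integral_const_mul] at h2
  exact h2

lemma Jint_bound {d : ℕ} (P : Measure (EuclideanSpace ℝ (Fin d))) (hP : AllMom P)
    (p : MvPolynomial (Fin d) ℝ) (w v : EuclideanSpace ℝ (Fin d)) (n : ℕ) :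
    ‖Jint P (p * lin v ^ n) w‖ ≤ √(∫ x, pev (p ^ 2) x ∂P) * √(∫ t, |t| ^ (2 * n) ∂(P.map fun x => ⟪v, x⟫_ℝ)) := by
  refine (norm_integral_le_integral_norm _).trans ?_
  have hmul : ∀ (p q : MvPolynomial (Fin d) ℝ) x, pev (p * q) x = pev p x * pev q x := by
    intro p q x; simp [pev]
  have hpow : ∀ (p : MvPolynomial (Fin d) ℝ) (n : ℕ) x, pev (p ^ n) x = pev p x ^ n := by
    intro p q x; simp [pev]
  have h1 : ∀ x, ‖(pev (p * lin v ^ n) x : ℂ) * Complex.exp (⟪w, x⟫_ℝ * Complex.I)‖ = ‖pev p x‖ * ‖pev (lin v ^ n) x‖ := by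
    intro x
    rw [norm_mul, Complex.norm_exp_ofReal_mul_I, mul_one, Complex.norm_real, hmul, norm_mul]
  simp_rw [h1]
  have hm : ∀ q : MvPolynomial (Fin d) ℝ, MemLp (pev q) (ENNReal.ofReal 2) P := by
    intro q
    rw [ENNReal.ofReal_ofNat, memLp_two_iff_integrable_sq (pev_cont q).aestronglyMeasurable]
    refine (hP (q ^ 2)).congr (.of_forall fun x => hpow q 2 x)
  refine (integral_mul_norm_le_Lp_mul_Lq Real.HolderConjugate.two_two (hm p) (hm (lin v ^ n))).trans ?_
  rw [integral_map (by fun_prop) (by fun_prop), Real.sqrt_eq_rpow, Real.sqrt_eq_rpow]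
  apply le_of_eq
  congr 3
  · ext x; simp [hpow]
  · ext x
    rw [hpow, pev_lin]
    simp [pow_mul]
    rw [← pow_mul, ← pow_mul, mul_comm, pow_mul, pow_mul, sq_abs]

lemma determinate {d : ℕ} (P Q : Measure (EuclideanSpace ℝ (Fin d))) [IsProbabilityMeasure P]
    [IsProbabilityMeasure Q]
    (A : Set (EuclideanSpace ℝ (Fin d))) (hspan : Submodule.span ℝ A = ⊤)
    (hP : AllMom P) (hQ : AllMom Q)
    (h : ∀ v ∈ A, P.map (fun x => ⟪v, x⟫_ℝ) = Q.map (fun x => ⟪v, x⟫_ℝ))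
    (H2 : ∀ v ∈ A, (∀ m : ℕ,
        Integrable (fun t => |t| ^ m) (P.map (fun x => ⟪v, x⟫_ℝ))) ∧
      Carleman (P.map (fun x => ⟪v, x⟫_ℝ)))
    (hm : ∀ p : MvPolynomial (Fin d) ℝ, ∫ x, pev p x ∂P = ∫ x, pev p x ∂Q) : P = Q := by
  have hstep : ∀ v ∈ A, ∀ w : EuclideanSpace ℝ (Fin d), (∀ p, Jint P p w = Jint Q p w) →
      ∀ t : ℝ, ∀ p, Jint P p (w + t • v) = Jint Q p (w + t • v) := by
    intro v hv w hw t p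
    have hprob : IsProbabilityMeasure (P.map (fun x => ⟪v, x⟫_ℝ)) :=
      Measure.isProbabilityMeasure_map (by fun_prop)
    obtain ⟨hM, hmono, hdiv⟩ := carleman_moments _ (H2 v hv).1 (H2 v hv).2
    have := denjoy_carleman _ hM hmono hdiv (√(∫ x, pev (p ^ 2) x ∂P) + √(∫ x, pev (p ^ 2) x ∂Q))
      (fun n t => Complex.I ^ n * (Jint P (p * lin v ^ n) (w + t • v) - Jint Q (p * lin v ^ n) (w + t • v)))
      ?_ ?_ ?_ t
    · simpa [sub_eq_zero] using this
    · intro n t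
      have h1 := ((Jint_deriv P hP (p * lin v ^ n) w v t).sub (Jint_deriv Q hQ (p * lin v ^ n) w v t)).const_mul (Complex.I ^ n)
      convert! h1 using 1
      rw [mul_assoc p, ← pow_succ]
      ring
    · intro n t
      rw [norm_mul, norm_pow, Complex.norm_I, one_pow, one_mul, add_mul]
      refine (norm_sub_le _ _).trans (add_le_add (Jint_bound P hP p _ v n) ?_)
      rw [h v hv]
      exact Jint_bound Q hQ p _ v n
    · intro n; simp [hw]
  have h0 : ∀ p, Jint P p 0 = Jint Q p 0 := by
    intro p
    simp only [Jint, inner_zero_left, Complex.ofReal_zero, zero_mul, Complex.exp_zero, mul_one]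
    rw [integral_complex_ofReal, integral_complex_ofReal, hm]
  have hall : ∀ u : EuclideanSpace ℝ (Fin d), ∀ w : EuclideanSpace ℝ (Fin d), (∀ p, Jint P p w = Jint Q p w) →
      ∀ t : ℝ, ∀ p, Jint P p (w + t • u) = Jint Q p (w + t • u) := by
    intro u
    have hu : u ∈ Submodule.span ℝ A := by rw [hspan]; trivial
    induction hu using Submodule.span_induction with
    | mem v hv => exact hstep v hv
    | zero => intro w hw t; simpa using hw
    | add x y _ _ hx hy =>
      intro w hw t
      rw [smul_add, ← add_assoc]
      exact hy _ (hx w hw t) t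
    | smul a x _ hx =>
      intro w hw t
      rw [smul_smul]
      exact hx w hw _
  refine Measure.ext_of_charFun ?_
  ext u
  have := hall u 0 h0 1 1
  simp only [one_smul, zero_add, Jint, pev, map_one, Complex.ofReal_one, one_mul] at this
  rw [charFun_apply, charFun_apply]
  simp_rw [real_inner_comm u]
  exact this

lemma span_top {n : ℕ} (hn : 1 ≤ n) (A : Set (EuclideanSpace ℝ (Fin (n+1))))
    (hAs : A ⊆ Metric.sphere (0 : EuclideanSpace ℝ (Fin (n+1))) 1)
    (hApos : 0 < μH[(n : ℝ)] A) : Submodule.span ℝ A = ⊤ := by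
  rw [← Submodule.orthogonal_eq_bot_iff, Submodule.eq_bot_iff]
  intro v hv
  have h0 : lin v = 0 := by
    refine sphere_poly n A hAs hApos _ 1 ?_ ?_
    · intro c u
      simp only [lin, map_sum, map_mul, MvPolynomial.eval_C, MvPolynomial.eval_X, Pi.smul_apply, smul_eq_mul, Finset.mul_sum]
      refine Finset.sum_congr rfl fun i _ => by ring
    · intro u hu
      have := (Submodule.mem_orthogonal' _ _).1 hv u (Submodule.subset_span hu)
      rw [← pev_lin] at this
      exact this
  have h1 : ⟪v, v⟫_ℝ = 0 := by rw [← pev_lin, h0]; simp [pev]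
  simpa using h1

lemma tight_of_span {d : ℕ} (μ : ℕ → ProbabilityMeasure (EuclideanSpace ℝ (Fin d)))
    (P : ProbabilityMeasure (EuclideanSpace ℝ (Fin d)))
    (A : Set (EuclideanSpace ℝ (Fin d))) (hspan : Submodule.span ℝ A = ⊤)
    (h : ∀ v ∈ A, Tendsto (fun n => (μ n).map (f := fun x => ⟪v, x⟫_ℝ) (by fun_prop)) atTop
      (𝓝 (P.map (f := fun x => ⟪v, x⟫_ℝ) (by fun_prop)))) :
    IsTightMeasureSet {((ν : ProbabilityMeasure (EuclideanSpace ℝ (Fin d))) : Measure (EuclideanSpace ℝ (Fin d))) | ν ∈ Set.range μ} := by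
  refine isTightMeasureSet_of_inner_tendsto ℝ fun y => ?_
  have hy : y ∈ Submodule.span ℝ A := by rw [hspan]; trivial
  induction hy using Submodule.span_induction with
  | mem v hv =>
    have hc : IsCompact (closure (Set.range fun n => (μ n).map (f := fun x => ⟪v, x⟫_ℝ) (by fun_prop))) :=
      (h v hv).isCompact_insert_range.closure_of_subset (Set.subset_insert _ _)
    have ht := isTightMeasureSet_of_isCompact_closure hc
    have h1 := tendsto_measure_norm_gt_of_isTightMeasureSet ht
    refine tendsto_of_tendsto_of_tendsto_of_le_of_le tendsto_const_nhds h1 (fun _ ↦ zero_le) fun r => ?_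
    refine iSup₂_le ?_
    rintro _ ⟨_, ⟨n, rfl⟩, rfl⟩
    refine le_trans (le_of_eq ?_) (le_iSup₂ (f := fun (ν : Measure ℝ) _ => ν {x | r < ‖x‖}) _ ⟨_, ⟨n, rfl⟩, rfl⟩)
    rw [ProbabilityMeasure.toMeasure_map, Measure.map_apply (by fun_prop)]
    · rfl
    · exact measurableSet_lt measurable_const measurable_norm
  | zero =>
    refine (tendsto_congr' ?_).mpr tendsto_const_nhds
    filter_upwards [eventually_ge_atTop 0] with r hr
    simp [not_lt.mpr hr]
  | add x y _ _ hx hy =>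
    have h2 : Tendsto (fun r : ℝ => r / 2) atTop atTop := tendsto_id.atTop_div_const two_pos
    have h3 := (hx.comp h2).add (hy.comp h2)
    rw [add_zero] at h3
    refine tendsto_of_tendsto_of_tendsto_of_le_of_le tendsto_const_nhds h3 (fun _ ↦ zero_le) fun r => ?_
    refine iSup₂_le fun ν hν => ?_
    have hsub : {z | r < ‖⟪x + y, z⟫_ℝ‖} ⊆ {z | r / 2 < ‖⟪x, z⟫_ℝ‖} ∪ {z | r / 2 < ‖⟪y, z⟫_ℝ‖} := by
      intro z hz
      by_contra hcon
      simp only [Set.mem_union, Set.mem_ofPred_eq, not_or, not_lt] at hcon hz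
      rw [inner_add_left] at hz
      have := norm_add_le ⟪x, z⟫_ℝ ⟪y, z⟫_ℝ
      linarith [hcon.1, hcon.2]
    refine (measure_mono hsub).trans ((measure_union_le _ _).trans (add_le_add ?_ ?_))
    · exact le_iSup₂ (f := fun (ν : Measure (EuclideanSpace ℝ (Fin d))) _ => ν {z | r / 2 < ‖⟪x, z⟫_ℝ‖}) ν hν
    · exact le_iSup₂ (f := fun (ν : Measure (EuclideanSpace ℝ (Fin d))) _ => ν {z | r / 2 < ‖⟪y, z⟫_ℝ‖}) ν hν
  | smul a x _ hx =>
    have h2 : Tendsto (fun r : ℝ => r / (|a| + 1)) atTop atTop := tendsto_id.atTop_div_const (by positivity)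
    refine tendsto_of_tendsto_of_tendsto_of_le_of_le' tendsto_const_nhds (hx.comp h2) (.of_forall fun _ ↦ zero_le) ?_
    refine .of_forall fun r => ?_
    refine iSup₂_mono fun ν hν => measure_mono fun z hz => ?_
    simp only [Set.mem_ofPred_eq, Real.norm_eq_abs, real_inner_smul_left, abs_mul] at hz ⊢
    rw [div_lt_iff₀ (by positivity)]
    nlinarith [abs_nonneg ⟪x, z⟫_ℝ]

theorem stmt13 (d : ℕ) (hd : 2 ≤ d)
    (Pn : ℕ → Measure (EuclideanSpace ℝ (Fin d)))
    (P : Measure (EuclideanSpace ℝ (Fin d)))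
    (hPn : ∀ n, IsProbabilityMeasure (Pn n)) [IsProbabilityMeasure P]
    (A : Set (EuclideanSpace ℝ (Fin d))) (hA : MeasurableSet A)
    (hAs : A ⊆ Metric.sphere (0 : EuclideanSpace ℝ (Fin d)) 1)
    (hApos : 0 < μH[(d : ℝ) - 1] A)
    (H1 : ∀ v ∈ A, WeakTendsto (fun n => (Pn n).map (fun x => ⟪v, x⟫_ℝ))
      (P.map (fun x => ⟪v, x⟫_ℝ)))
    (H2 : ∀ v ∈ A, (∀ m : ℕ,
        Integrable (fun t => |t| ^ m) (P.map (fun x => ⟪v, x⟫_ℝ))) ∧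
      Carleman (P.map (fun x => ⟪v, x⟫_ℝ))) :
    WeakTendsto Pn P := by
  obtain ⟨n, rfl⟩ : ∃ n, d = n + 1 := ⟨d - 1, by omega⟩
  have hApos' : 0 < μH[(n : ℝ)] A := by
    have : (((n + 1 : ℕ) : ℝ) - 1) = n := by push_cast; ring
    rwa [this] at hApos
  have hspan := span_top (by omega) A hAs hApos'
  set μ : ℕ → ProbabilityMeasure (EuclideanSpace ℝ (Fin (n+1))) := fun k => ⟨Pn k, hPn k⟩ with hμ
  set P' : ProbabilityMeasure (EuclideanSpace ℝ (Fin (n+1))) := ⟨P, inferInstance⟩ with hP'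
  have hcont : ∀ v : EuclideanSpace ℝ (Fin (n+1)), Continuous fun x => ⟪v, x⟫_ℝ := fun v => by fun_prop
  have hconv : ∀ v ∈ A, Tendsto (fun k => (μ k).map (f := fun x => ⟪v, x⟫_ℝ) (by fun_prop)) atTop
      (𝓝 (P'.map (f := fun x => ⟪v, x⟫_ℝ) (by fun_prop))) := by
    intro v hv
    rw [ProbabilityMeasure.tendsto_iff_forall_integral_tendsto]
    exact H1 v hv
  have hmain : Tendsto μ atTop (𝓝 P') := by
    refine (isCompact_closure_of_isTightMeasureSet (tight_of_span μ P' A hspan hconv)).tendsto_nhds_of_unique_mapClusterPt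
      (.of_forall fun k => subset_closure ⟨k, rfl⟩) ?_
    intro Q _ hQ
    have hproj : ∀ v ∈ A, P.map (fun x => ⟪v, x⟫_ℝ) = (Q : Measure _).map (fun x => ⟪v, x⟫_ℝ) := by
      intro v hv
      have h1 := hQ.continuousAt_comp (ProbabilityMeasure.continuous_map (hcont v)).continuousAt
      have h2 : Q.map (hcont v).measurable.aemeasurable = P'.map (hcont v).measurable.aemeasurable :=
        by
          have h3 : ClusterPt _ _ := ClusterPt.mono h1.clusterPt (hconv v hv)
          haveI : (𝓝 _ ⊓ 𝓝 _).NeBot := h3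
          exact eq_of_nhds_neBot h3
      exact (congrArg (fun ν : ProbabilityMeasure ℝ => (ν : Measure ℝ)) h2).symm
    have hPm : AllMom P := allMom_of P A hspan fun v hv => (H2 v hv).1
    have hQm : AllMom (Q : Measure (EuclideanSpace ℝ (Fin (n+1)))) :=
      allMom_of _ A hspan fun v hv => by rw [← hproj v hv]; exact (H2 v hv).1
    have := determinate P Q A hspan hPm hQm hproj H2 (moments_eq P Q A hAs hApos' hPm hQm hproj)
    exact Subtype.ext this.symm
  exact ProbabilityMeasure.tendsto_iff_forall_integral_tendsto.1 hmain
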